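/- arXiv:1209.2229 — 7 statements merged into one kernel-verified Lean document; each statement's English description precedes it below -/
import Mathlib

section
/- Assume DNS^V: for every predicate A : ℕ → Prop, ¬¬(∀ n, A n ∨ ¬A n). Assume Markov's Principle MP: for every decidable predicate A₀ : ℕ → Prop (i.e. ∀ n, A₀ n ∨ ¬A₀ n), if ¬¬(∃ n, A₀ n) then ∃ n, A₀ n. Then EnDec holds: for every enumerable set B ⊆ ℕ, if for every decidable subset C ⊆ B the existence of some m ∉ C implies the existence of some m with m ∉ C and m ∈ B, then every natural number belongs to B. -/
/-- DNS^V and MP together imply EnDec (Theorem 2). -/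
theorem stmt_1
    (hDNSV : ∀ A : ℕ → Prop, ¬¬(∀ n, A n ∨ ¬A n))
    (hMP : ∀ A₀ : ℕ → Prop, (∀ n, A₀ n ∨ ¬A₀ n) → ¬¬(∃ n, A₀ n) → ∃ n, A₀ n) :
    ∀ B : Set ℕ,
      (∃ f : ℕ → ℕ, ∀ n, n ∈ B ↔ ∃ m, f m = n + 1) →
      (∀ C : Set ℕ, C ⊆ B → (∀ x, x ∈ C ∨ x ∉ C) →
        (∃ m, m ∉ C) → ∃ m, m ∉ C ∧ m ∈ B) →
      ∀ n, n ∈ B := by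
  intro B ⟨f, hf⟩ hB n
  -- Membership in an enumerable set is an existential over a decidable predicate, so by MP
  -- it is enough to refute `n ∉ B`. The argument is intuitionistic throughout.
  refine (hf n).2 (hMP (fun m => f m = n + 1) (fun m => Decidable.em _) fun hn => ?_)
  -- The goal is now `False`, so DNS^V allows `B` itself to be treated as decidable and used as `C`.
  refine hDNSV (fun k => k ∈ B) fun hdec => ?_
  obtain ⟨m, hmC, hmB⟩ := hB B (fun _ h => h) hdec ⟨n, fun h => hn ((hf n).1 h)⟩
  exact hmC hmB
end

section
/- Let B ⊆ ℕ and n ∈ ℕ. Assume the instance of DNS^V_S: ((∀ x, x ∈ B ∨ (x ∈ B → n ∈ B)) → n ∈ B) → n ∈ B. Assume the premise of the minimal-logic version of EnDec: for every s ∈ ℕ and every C ⊆ B such that ∀ x, x ∈ C ∨ (x ∈ C → s ∈ B), if there exists m with (m ∈ C → s ∈ B), then there exists m with (m ∈ C → s ∈ B) and m ∈ B. Then n ∈ B. -/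
/-- The instance of DNS^V_S together with the premise of the minimal-logic
version of EnDec yields `n ∈ B` (Theorem 4). -/
theorem stmt_3 (B : Set ℕ) (n : ℕ)
    (hDNSVS : ((∀ x, x ∈ B ∨ (x ∈ B → n ∈ B)) → n ∈ B) → n ∈ B)
    (hprem : ∀ s : ℕ, ∀ C : Set ℕ, C ⊆ B →
      (∀ x, x ∈ C ∨ (x ∈ C → s ∈ B)) →
      (∃ m, m ∈ C → s ∈ B) →
      ∃ m, (m ∈ C → s ∈ B) ∧ m ∈ B) :
    n ∈ B := by
  -- The hypothesis `hDNSVS` supplies decidability of `B` relative to the goal `n ∈ B`, so `C = B`,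
  -- `s = n` is admissible in `hprem`, with `m = n` as the trivial initial witness.
  refine hDNSVS fun hdec => ?_
  obtain ⟨m, hm, hmB⟩ := hprem n B subset_rfl hdec ⟨n, id⟩
  exact hm hmB
end

section
/- Open Induction on Cantor space holds: for every π : ℕ → List Bool, if the open set U_π is progressive, then every α : ℕ → Bool belongs to U_π. -/
/-!
Classically, open induction is the statement that a nonempty closed subset of Cantor space has a
lexicographically least element. If the complement `C` of `U_π` is nonempty, a least element `α` is
found digit by digit. Starting from any `γ 0 ∈ C`, let `γ (n + 1) ∈ C` agree with `γ n` below `n` and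
have digit `false` at `n` whenever some element of `C` does both (`exists_minimal_digit`). The `γ n`
converge to a stream `α` which lies in `C` because `U_π` is open. No `β <lex α` lies in `C`: at the
first place `n` where they differ it would be a competitor forcing `α n = false`. So every
`β <lex α` is in `U_π` but `α` is not, contradicting progressivity.
-/

/-- The initial segment of length `n` of a stream `α`. -/
def initSeg (α : ℕ → Bool) (n : ℕ) : List Bool := (List.range n).map α

/-- Lexicographic order on Cantor space (`false < true`). -/
def lexLt (β α : ℕ → Bool) : Prop :=
  ∃ n, (∀ i, i < n → β i = α i) ∧ β n = false ∧ α n = true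

/-- Membership in the open set `U_π` enumerated by `π`. -/
def memU (π : ℕ → List Bool) (α : ℕ → Bool) : Prop :=
  ∃ n k, initSeg α n = π k

/-- `U_π` is progressive. -/
def Progressive (π : ℕ → List Bool) : Prop :=
  ∀ α, (∀ β, lexLt β α → memU π β) → memU π α

/-- `p` is uniformly barred by `π`. -/
def Barred (π : ℕ → List Bool) (p : List Bool) : Prop :=
  ∃ k, ∀ q : List Bool, q.length = k → ∃ l m, (p ++ q).take l = π m

/-- The stream `α` is greedy for `χ`: it tries to stay outside the set decided
by `χ` for as long as possible, preferring the value `false`. -/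
def Greedy (χ : List Bool → Bool) (α : ℕ → Bool) : Prop :=
  ∀ n,
    (χ (initSeg α n ++ [false]) = false → α n = false) ∧
    (χ (initSeg α n ++ [false]) = true → χ (initSeg α n ++ [true]) = false → α n = true) ∧
    (χ (initSeg α n ++ [false]) = true → χ (initSeg α n ++ [true]) = true → α n = false)

/-- `U_π` is open: membership is inherited by every stream sharing the initial segment in `π`. -/
theorem memU_of_agree {π : ℕ → List Bool} {α : ℕ → Bool} (h : memU π α) :
    ∃ n, ∀ γ : ℕ → Bool, (∀ i, i < n → γ i = α i) → memU π γ := by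
  obtain ⟨n, k, hk⟩ := h
  refine ⟨n, fun γ hγ => ⟨n, k, ?_⟩⟩
  rw [← hk]
  exact List.map_congr_left fun i hi => hγ i (List.mem_range.mp hi)

/-- A point of `C` can be moved within `C`, keeping its first `n` digits, so that its digit at `n`
is least possible. -/
theorem exists_minimal_digit (C : Set (ℕ → Bool)) (n : ℕ) (γ : C) :
    ∃ δ : C, (∀ i, i < n → δ.1 i = γ.1 i) ∧
      ∀ β ∈ C, (∀ i, i < n → β i = γ.1 i) → β n = false → δ.1 n = false := by
  by_cases h : ∃ β ∈ C, (∀ i, i < n → β i = γ.1 i) ∧ β n = false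
  · obtain ⟨β, hβ, hag, hn⟩ := h
    exact ⟨⟨β, hβ⟩, hag, fun _ _ _ _ => hn⟩
  · exact ⟨γ, fun _ _ => rfl, fun β hβ hag hn => (h ⟨β, hβ, hag, hn⟩).elim⟩

/-- Open Induction on Cantor space (OI-𝔹). -/
theorem stmt_5 :
    ∀ π : ℕ → List Bool, Progressive π → ∀ α : ℕ → Bool, memU π α := by
  intro π hπ α₀
  by_contra hα₀
  let C : Set (ℕ → Bool) := {γ | ¬ memU π γ}
  choose step hag hmin using exists_minimal_digit C
  let γ : ℕ → C := fun n => Nat.rec ⟨α₀, hα₀⟩ (fun n δ => step n δ) n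
  let α : ℕ → Bool := fun n => (γ (n + 1)).1 n
  have hγ : ∀ n i, i < n → (γ n).1 i = α i := by
    intro n i hi
    induction n, hi using Nat.le_induction with
    | base => rfl
    | succ m hm ih => exact (hag m (γ m) i hm).trans ih
  have hαC : ¬ memU π α := by
    intro h
    obtain ⟨n, hn⟩ := memU_of_agree h
    exact (γ n).2 (hn _ (hγ n))
  refine hαC (hπ α ?_)
  rintro β ⟨n, hβα, hβn, hαn⟩
  by_contra hβ
  have hfalse : α n = false :=
    hmin n (γ n) β hβ (fun i hi => (hβα i hi).trans (hγ n i hi).symm) hβn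
  simp [hfalse] at hαn
end

section
/- Let π : ℕ → List Bool be such that the open set U_π is progressive, and let χ : List Bool → Bool satisfy: for every p, if χ p = true then p is uniformly barred by π. If α : ℕ → Bool is greedy for χ, then α belongs to U_π. -/
/-- A stream extending a barred prefix meets the bar: cut the stream `k` places after the prefix,
where `k` is the uniform length, and use that prefixes of initial segments are initial segments. -/
theorem memU_of_barred_initSeg (π : ℕ → List Bool) (β : ℕ → Bool) (n : ℕ)
    (h : Barred π (initSeg β n)) : memU π β := by
  obtain ⟨k, hk⟩ := h
  obtain ⟨l, m, hm⟩ := hk ((List.range k).map fun i => β (n + i)) (by simp)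
  refine ⟨min l (n + k), m, ?_⟩
  rw [← hm]
  simp only [initSeg]
  rw [← List.take_range, List.range_add]
  simp [Function.comp_def]

/-- The greedy stream belongs to the progressive open set `U_π`. -/
theorem stmt_10 (π : ℕ → List Bool) (hprog : Progressive π)
    (χ : List Bool → Bool) (hχ : ∀ p, χ p = true → Barred π p)
    (α : ℕ → Bool) (hg : Greedy χ α) :
    memU π α := by
  refine hprog α ?_
  rintro β ⟨n, hlt, hβ, hα⟩
  -- A greedy stream takes the value `true` only where the branch `false` is decided by `χ`.
  have h_dec : χ (initSeg α n ++ [false]) = true := by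
    by_contra hc
    have := (hg n).1 (by simpa using hc)
    simp [hα] at this
  have h_seg : initSeg β (n + 1) = initSeg α n ++ [false] := by
    simp only [initSeg, List.range_succ, List.map_append, List.map_cons, List.map_nil, hβ]
    congr 1
    exact List.map_congr_left fun i hi => hlt i (List.mem_range.1 hi)
  exact memU_of_barred_initSeg π β (n + 1) (h_seg ▸ hχ _ h_dec)
end

section
/- Let π : ℕ → List Bool, let χ : List Bool → Bool satisfy: for every p, if χ p = true then p is uniformly barred by π, and let α : ℕ → Bool be greedy for χ. Suppose ᾱl is uniformly barred by π. Then for every n ≤ l, if χ(ᾱ(l−n)) = false then there exists l' such that χ(ᾱl') = false and ᾱl' is uniformly barred by π. -/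
/-- A bound witnessing `Barred` may be enlarged: a long `q` is cut to length `k`, and the
barring prefix of the cut sequence is a prefix of the full one. -/
theorem barred_bound_mono {π : ℕ → List Bool} {p : List Bool} {k K : ℕ} (hkK : k ≤ K)
    (h : ∀ q : List Bool, q.length = k → ∃ l m, (p ++ q).take l = π m)
    (q : List Bool) (hq : q.length = K) : ∃ l m, (p ++ q).take l = π m := by
  obtain ⟨l, m, hl⟩ := h (q.take k) (by simp; omega)
  refine ⟨min l (p.length + k), m, ?_⟩
  rw [← hl, ← List.take_take, List.take_length_add_append]

theorem Barred.of_children {π : ℕ → List Bool} {p : List Bool}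
    (h0 : Barred π (p ++ [false])) (h1 : Barred π (p ++ [true])) : Barred π p := by
  obtain ⟨k0, h0⟩ := h0
  obtain ⟨k1, h1⟩ := h1
  refine ⟨max k0 k1 + 1, fun q hq => ?_⟩
  cases q with
  | nil => simp at hq
  | cons b q =>
    have hq' : q.length = max k0 k1 := by simpa using hq
    cases b
    · simpa using barred_bound_mono (le_max_left k0 k1) h0 q hq'
    · simpa using barred_bound_mono (le_max_right k0 k1) h1 q hq'

theorem initSeg_succ (α : ℕ → Bool) (n : ℕ) : initSeg α (n + 1) = initSeg α n ++ [α n] := by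
  simp [initSeg, List.range_succ]

/-- Backward induction along the greedy stream: from a barred prefix one can
find a prefix that is barred while staying outside the set decided by `χ`. -/
theorem stmt_11 (π : ℕ → List Bool) (χ : List Bool → Bool)
    (hχ : ∀ p, χ p = true → Barred π p)
    (α : ℕ → Bool) (hg : Greedy χ α)
    (l : ℕ) (hbar : Barred π (initSeg α l)) :
    ∀ n, n ≤ l → χ (initSeg α (l - n)) = false →
      ∃ l', χ (initSeg α l') = false ∧ Barred π (initSeg α l') := by
  intro n
  induction n with
  | zero => exact fun _ h => ⟨l, h, hbar⟩
  | succ n ih =>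
    intro hn hf
    cases hc : χ (initSeg α (l - n)) with
    | false => exact ih (by omega) hc
    | true =>
      obtain ⟨j, hj, hj'⟩ : ∃ j, l - (n + 1) = j ∧ l - n = j + 1 := ⟨_, rfl, by omega⟩
      rw [hj] at hf
      rw [hj', initSeg_succ] at hc
      obtain ⟨g0, g1, -⟩ := hg j
      have c0 : χ (initSeg α j ++ [false]) = true := by
        by_contra h
        rw [Bool.not_eq_true] at h
        rw [g0 h] at hc
        simp [h] at hc
      have c1 : χ (initSeg α j ++ [true]) = true := by
        by_contra h
        rw [Bool.not_eq_true] at h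
        rw [g1 c0 h] at hc
        simp [h] at hc
      exact ⟨j, hf, .of_children (hχ _ c0) (hχ _ c1)⟩
end

section
/- The schema DNS is equivalent to the schema DNS^V: (for every predicate A : ℕ → Prop, (∀ n, ¬¬A n) → ¬¬(∀ n, A n)) holds if and only if (for every predicate A : ℕ → Prop, ¬¬(∀ n, A n ∨ ¬A n)) holds. -/
/-! Since each side is a classical tautology, the content lies in the equivalence being intuitionistic:
the proof below is a bare term that uses no axioms, so it is valid constructively. It follows the
equivalence of double-negation elimination and excluded middle. -/

/-- The schema DNS is equivalent to Veldman's variant DNS^V. -/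
theorem stmt_13 :
    (∀ A : ℕ → Prop, (∀ n, ¬¬A n) → ¬¬(∀ n, A n)) ↔
    (∀ A : ℕ → Prop, ¬¬(∀ n, A n ∨ ¬A n)) :=
  -- DNS for `A n ∨ ¬A n`, each instance of which is intuitionistically not refutable.
  ⟨fun dns A => dns (fun n => A n ∨ ¬A n) fun _ h => h (Or.inr fun a => h (Or.inl a)),
  -- Under the double negation, `A n ∨ ¬A n` together with `¬¬A n` gives `A n`.
    fun dnsV A hA hn => dnsV A fun em => hn fun n => (em n).resolve_right (hA n)⟩
end

section
/- Assume EnDec for subsets of ℕ: for every enumerable set B ⊆ ℕ, if for every decidable subset C ⊆ B the existence of some m ∉ C implies the existence of some m with m ∉ C and m ∈ B, then every natural number belongs to B. Then the analogous principle holds for subsets of List Bool: for every set B ⊆ List Bool such that there exists f : ℕ → Option (List Bool) with (p ∈ B ↔ ∃ m, f m = some p) for all p, if for every decidable subset C ⊆ B the existence of some q ∉ C implies the existence of some r with r ∉ C and r ∈ B, then every p : List Bool belongs to B. -/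
/-!
The principle is transported along a bijection `e : List Bool ≃ ℕ`, which exists because `List Bool`
is countably infinite. For `B ⊆ List Bool`, the principle on `ℕ` is applied to the preimage of `B`
under `e.symm`: an enumeration of `B` by optional strings becomes one of the preimage in the
successor convention (`none` goes to `0`, `some p` to `e p + 1`), and a decidable `C ⊆ ℕ` is pulled
back along `e` to a decidable set of strings.
-/

/-- EnDec transports from ℕ to finite bit-strings. -/
theorem stmt_14
    (hEnDec : ∀ B : Set ℕ,
      (∃ f : ℕ → ℕ, ∀ n, n ∈ B ↔ ∃ m, f m = n + 1) →
      (∀ C : Set ℕ, C ⊆ B → (∀ x, x ∈ C ∨ x ∉ C) →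
        (∃ m, m ∉ C) → ∃ m, m ∉ C ∧ m ∈ B) →
      ∀ n, n ∈ B) :
    ∀ B : Set (List Bool),
      (∃ f : ℕ → Option (List Bool), ∀ p, p ∈ B ↔ ∃ m, f m = some p) →
      (∀ C : Set (List Bool), C ⊆ B → (∀ x, x ∈ C ∨ x ∉ C) →
        (∃ q, q ∉ C) → ∃ r, r ∉ C ∧ r ∈ B) →
      ∀ p : List Bool, p ∈ B := by
  intro B ⟨f, hf⟩ hB p
  let e : List Bool ≃ ℕ := @Denumerable.eqv _ (Denumerable.ofEncodableOfInfinite (List Bool))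
  have key : ∀ n, n ∈ e.symm ⁻¹' B := by
    refine hEnDec _ ⟨fun m => (f m).elim 0 (fun q => e q + 1), fun n => ?_⟩ ?_
    · rw [Set.mem_preimage, hf]
      refine exists_congr fun m => ?_
      dsimp only
      cases f m with
      | none => simp
      | some q => simp [Equiv.eq_symm_apply]
    · rintro C hCB hC ⟨m, hm⟩
      obtain ⟨r, hrC, hrB⟩ := hB (e ⁻¹' C)
        (fun x hx => by simpa using hCB hx) (fun x => hC (e x)) ⟨e.symm m, by simpa using hm⟩
      exact ⟨e r, hrC, by simpa using hrB⟩
  simpa using key (e p)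
end
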